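/- Let κ be a contraction and μ₁, μ₂ mergers between nested graphs such that the composite μ₂ ∘ μ₁ ∘ κ is defined. Then (μ₂ ∘ μ₁) ∘ κ = μ₂ ∘ (μ₁ ∘ κ) as morphisms of the category NGr of nested graphs; that is, the canonical merger–contraction decomposition of the admissible epi-functor (μ₂ ∘ μ₁) ∘ κ coincides with the decomposition obtained by first canonically decomposing μ₁ ∘ κ as κ'' ∘ μ₁' and then canonically decomposing μ₂ ∘ κ''. -/

import Mathlib

open CategoryTheory

universe v u

/-- A morphism in a category is an identity morphism (up to `eqToHom`). -/
def IsId {C : Type u} [Category.{v} C] {A B : C} (f : A ⟶ B) : Prop :=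
  ∃ h : A = B, f = eqToHom h

/-- A flag in a nested graph is a non-identity morphism. -/
def IsFlag {C : Type u} [Category.{v} C] {A B : C} (f : A ⟶ B) : Prop :=
  ¬ IsId f

/-- An irreducible flag is a flag that cannot be written as the composite of two flags. -/
def IsIrred {C : Type u} [Category.{v} C] {A B : C} (f : A ⟶ B) : Prop :=
  IsFlag f ∧ ¬ ∃ (X : C) (g : A ⟶ X) (h : X ⟶ B), IsFlag g ∧ IsFlag h ∧ g ≫ h = f

/-- A grading: a functor to the finite ordinal `Fin n` (viewed as a preorder category)
sending every non-identity morphism to a non-identity morphism. -/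
def IsGrading {C : Type u} [Category.{v} C] {n : ℕ} (G : C ⥤ Fin n) : Prop :=
  ∀ ⦃A B : C⦄ (f : A ⟶ B), IsFlag f → IsFlag (G.map f)

/-- A nested graph: a category admitting a grading into some finite ordinal. -/
def IsNestedGraph (C : Type u) [Category.{v} C] : Prop :=
  ∃ (n : ℕ) (G : C ⥤ Fin n), IsGrading G

/-- A functor `φ` contracts a flag `f` if `φ.map f` is an identity. -/
def Contracts {C D : Type u} [Category.{v} C] [Category.{v} D]
    (φ : C ⥤ D) {A B : C} (f : A ⟶ B) : Prop :=
  IsId (φ.map f)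

/-- An admissible functor: it maps irreducible flags to identities or irreducible flags,
and whenever it contracts an irreducible flag with domain `A`, it contracts every
irreducible flag with domain `A`. -/
def IsAdmissible {C D : Type u} [Category.{v} C] [Category.{v} D] (φ : C ⥤ D) : Prop :=
  (∀ ⦃A B : C⦄ (f : A ⟶ B), IsIrred f → IsId (φ.map f) ∨ IsIrred (φ.map f)) ∧
  (∀ ⦃A B B' : C⦄ (f : A ⟶ B) (g : A ⟶ B'), IsIrred f → IsIrred g →
      Contracts φ f → Contracts φ g)

/-- The morphisms of the codomain generated by the image of a functor. -/
inductive GenBy {C D : Type u} [Category.{v} C] [Category.{v} D] (φ : C ⥤ D) :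
    ∀ {X Y : D}, (X ⟶ Y) → Prop
  | id (X : D) : GenBy φ (𝟙 X)
  | map {A B : C} (f : A ⟶ B) : GenBy φ (φ.map f)
  | comp {X Y Z : D} (f : X ⟶ Y) (g : Y ⟶ Z) :
      GenBy φ f → GenBy φ g → GenBy φ (f ≫ g)

/-- An epi-functor: its image generates the codomain. -/
def IsEpiFunctor {C D : Type u} [Category.{v} C] [Category.{v} D] (φ : C ⥤ D) : Prop :=
  Function.Surjective φ.obj ∧ ∀ ⦃X Y : D⦄ (f : X ⟶ Y), GenBy φ f

/-- `μ : C ⥤ D` exhibits `D` as the quotient of `C` identifying `r`-related objects,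
with morphisms freely generated by the morphisms of `C` subject to the composition
relations of `C` (expressed via the universal property). -/
def IsQuotientBy {C D : Type u} [Category.{v} C] [Category.{v} D]
    (r : C → C → Prop) (μ : C ⥤ D) : Prop :=
  (∀ A B : C, μ.obj A = μ.obj B ↔ Relation.EqvGen r A B) ∧
  Function.Surjective μ.obj ∧
  (∀ ⦃X Y : D⦄ (f : X ⟶ Y), GenBy μ f) ∧
  (∀ (E : Type u) [Category.{v} E] (F : C ⥤ E),
      (∀ A B : C, r A B → F.obj A = F.obj B) → ∃! F' : D ⥤ E, μ ⋙ F' = F)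

/-- A merger: an admissible epi-functor exhibiting its codomain as the quotient of its
domain by an equivalence relation on objects, with morphisms freely generated subject to
the composition relations of the domain. -/
def IsMerger {C D : Type u} [Category.{v} C] [Category.{v} D] (μ : C ⥤ D) : Prop :=
  IsAdmissible μ ∧ IsEpiFunctor μ ∧
    ∃ r : C → C → Prop, Equivalence r ∧ IsQuotientBy r μ

/-- `A` is a vertex of its fiber under `φ`: it is not the domain of any flag
contracted by `φ`. -/
def IsVertexOver {C D : Type u} [Category.{v} C] [Category.{v} D]
    (φ : C ⥤ D) (A : C) : Prop :=
  ∀ ⦃B : C⦄ (f : A ⟶ B), Contracts φ f → IsId f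

/-- `A₁` is a vertex of the fiber of `φ` over `A₂`. -/
def IsFiberVertex {C D : Type u} [Category.{v} C] [Category.{v} D]
    (φ : C ⥤ D) (A₂ : D) (A₁ : C) : Prop :=
  φ.obj A₁ = A₂ ∧ IsVertexOver φ A₁

/-- A contraction: an admissible epi-functor each of whose fibers is a corolla,
i.e. has a unique vertex. -/
def IsContraction {C D : Type u} [Category.{v} C] [Category.{v} D] (κ : C ⥤ D) : Prop :=
  IsAdmissible κ ∧ IsEpiFunctor κ ∧ ∀ A₂ : D, ∃! A₁ : C, IsFiberVertex κ A₂ A₁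

/-- The canonical merger relation of `φ`: it relates distinct objects `A ≠ B` exactly when
`φ A = φ B` and both `A` and `B` are vertices of the fiber of `φ` over `φ A`. -/
def mergerRel {C D : Type u} [Category.{v} C] [Category.{v} D] (φ : C ⥤ D) :
    C → C → Prop :=
  fun A B => A ≠ B ∧ φ.obj A = φ.obj B ∧ IsVertexOver φ A ∧ IsVertexOver φ B

/-- A canonical merger–contraction decomposition of `φ`: the merger part is the quotient
of the domain identifying, within each fiber of `φ`, all objects that are vertices of that
fiber. -/
def IsCanonicalDecomp {C P D : Type u} [Category.{v} C] [Category.{v} P] [Category.{v} D]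
    (φ : C ⥤ D) (μ : C ⥤ P) (κ : P ⥤ D) : Prop :=
  IsQuotientBy (mergerRel φ) μ ∧ μ ⋙ κ = φ

/-- Two merger–contraction pairs are equal as morphisms of nested graphs: one is obtained
from the other by shifting an isomorphism from the merger to the contraction. -/
def PairEquiv {A B P P' : Type u} [Category.{v} A] [Category.{v} B]
    [Category.{v} P] [Category.{v} P']
    (μ : A ⥤ P) (κ : P ⥤ B) (μ' : A ⥤ P') (κ' : P' ⥤ B) : Prop :=
  ∃ (e : P ⥤ P') (e' : P' ⥤ P), e ⋙ e' = 𝟭 P ∧ e' ⋙ e = 𝟭 P' ∧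
    μ ⋙ e = μ' ∧ e ⋙ κ' = κ

/-- A category contains no cycle of flags. -/
def NoFlagCycles (C : Type u) [Category.{v} C] : Prop :=
  ∀ (k : ℕ), 0 < k → ∀ (obj : Fin (k + 1) → C)
    (flag : ∀ i : Fin k, obj i.castSucc ⟶ obj i.succ),
    (∀ i, IsFlag (flag i)) → obj 0 ≠ obj (Fin.last k)

theorem IsId.map {C D : Type*} [Category C] [Category D] (F : C ⥤ D) {A B : C} {f : A ⟶ B}
    (hf : IsId f) : IsId (F.map f) := by
  obtain ⟨rfl, rfl⟩ := hf
  exact ⟨rfl, by simp⟩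

theorem IsId.comp {C : Type*} [Category C] {A B X : C} {f : A ⟶ B} {g : B ⟶ X}
    (hf : IsId f) (hg : IsId g) : IsId (f ≫ g) := by
  obtain ⟨rfl, rfl⟩ := hf
  obtain ⟨rfl, rfl⟩ := hg
  exact ⟨rfl, by simp⟩

theorem IsGrading.isId_of_obj_eq {C : Type*} [Category C] {n : ℕ} {G : C ⥤ Fin n}
    (hG : IsGrading G) {A B : C} (f : A ⟶ B) (h : G.obj A = G.obj B) : IsId f := by
  by_contra hf
  exact hG f hf ⟨h, Subsingleton.elim _ _⟩

/-- In a nested graph both factors of an identity are identities. -/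
theorem IsNestedGraph.isId_of_comp {C : Type*} [Category C] (hC : IsNestedGraph C)
    {A B X : C} {f : A ⟶ B} {g : B ⟶ X} (h : IsId (f ≫ g)) : IsId f ∧ IsId g := by
  obtain ⟨n, G, hG⟩ := hC
  obtain ⟨rfl, -⟩ := h
  have hAB : G.obj A = G.obj B := le_antisymm (leOfHom (G.map f)) (leOfHom (G.map g))
  exact ⟨hG.isId_of_obj_eq f hAB, hG.isId_of_obj_eq g hAB.symm⟩

attribute [local instance] uliftCategory

/-- The functor to the additive monoid `ℕ` recording the degree difference of a morphism. -/
def degreeFunctor {C : Type u} [Category.{v} C] {n : ℕ} (G : C ⥤ Fin n) :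
    C ⥤ ULift.{u} (SingleObj (ULift.{v} (Multiplicative ℕ))) where
  obj _ := ⟨SingleObj.star _⟩
  map {A B} _ := ⟨Multiplicative.ofAdd ((G.obj B : ℕ) - (G.obj A : ℕ))⟩
  map_id A := by
    apply ULift.ext
    change Multiplicative.ofAdd ((G.obj A : ℕ) - (G.obj A : ℕ)) = 1
    simp
  map_comp {A B X} f g := by
    apply ULift.ext
    change Multiplicative.ofAdd ((G.obj X : ℕ) - (G.obj A : ℕ)) =
      Multiplicative.ofAdd (((G.obj X : ℕ) - (G.obj B : ℕ)) + ((G.obj B : ℕ) - (G.obj A : ℕ)))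
    have hf : (G.obj A : ℕ) ≤ G.obj B := leOfHom (G.map f)
    have hg : (G.obj B : ℕ) ≤ G.obj X := leOfHom (G.map g)
    congr 1
    omega

theorem IsGrading.isId_of_isId_degreeFunctor_map {C : Type u} [Category.{v} C] {n : ℕ}
    {G : C ⥤ Fin n} (hG : IsGrading G) {A B : C} {f : A ⟶ B}
    (h : IsId ((degreeFunctor G).map f)) : IsId f := by
  obtain ⟨_, hf⟩ := h
  have hdeg : (G.obj B : ℕ) - (G.obj A : ℕ) = 0 :=
    congrArg (fun x : ULift.{v} (Multiplicative ℕ) => x.down.toAdd) hf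
  have hle : (G.obj A : ℕ) ≤ G.obj B := leOfHom (G.map f)
  exact hG.isId_of_obj_eq f (Fin.ext (by omega))

section Quotient

variable {C D E : Type u} [Category.{v} C] [Category.{v} D] [Category.{v} E]

/-- A quotient of a nested graph on objects contracts no flag. -/
theorem IsQuotientBy.isId_of_contracts {r : C → C → Prop} {μ : C ⥤ D} (hC : IsNestedGraph C)
    (hμ : IsQuotientBy r μ) {A B : C} {f : A ⟶ B} (hf : Contracts μ f) : IsId f := by
  obtain ⟨n, G, hG⟩ := hC
  obtain ⟨F, hF, -⟩ := hμ.2.2.2 _ (degreeFunctor G) (fun _ _ _ => rfl)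
  apply hG.isId_of_isId_degreeFunctor_map
  rw [← hF]
  exact IsId.map F hf

theorem IsQuotientBy.obj_eq {r : C → C → Prop} {μ : C ⥤ D} (hμ : IsQuotientBy r μ)
    {A B : C} (h : r A B) : μ.obj A = μ.obj B :=
  (hμ.1 A B).2 (.rel _ _ h)

/-- Functors out of a quotient are determined by their restriction along the projection. -/
theorem IsQuotientBy.functor_ext {r : C → C → Prop} {μ : C ⥤ D} (hμ : IsQuotientBy r μ)
    {F F' : D ⥤ E} (h : μ ⋙ F = μ ⋙ F') : F = F' := by
  refine (hμ.2.2.2 E (μ ⋙ F') fun A B hAB => ?_).unique h rfl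
  exact congrArg F'.obj (hμ.obj_eq hAB)

theorem isVertexOver_comp_iff {φ : C ⥤ D} {ψ : D ⥤ E}
    (hψ : ∀ ⦃A B : D⦄ (f : A ⟶ B), Contracts ψ f → IsId f) {A : C} :
    IsVertexOver (φ ⋙ ψ) A ↔ IsVertexOver φ A :=
  ⟨fun h _ f hf => h f (IsId.map ψ hf), fun h _ f hf => h f (hψ _ hf)⟩

theorem IsQuotientBy.obj_eq_of_isVertexOver {φ : C ⥤ E} {μ : C ⥤ D}
    (hμ : IsQuotientBy (mergerRel φ) μ) {A B : C} (h : φ.obj A = φ.obj B)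
    (hA : IsVertexOver φ A) (hB : IsVertexOver φ B) : μ.obj A = μ.obj B := by
  by_cases hAB : A = B
  · rw [hAB]
  · exact hμ.obj_eq ⟨hAB, h, hA, hB⟩

theorem isVertexOver_iff_of_eqvGen_mergerRel {φ : C ⥤ D} {A B : C}
    (h : Relation.EqvGen (mergerRel φ) A B) : IsVertexOver φ A ↔ IsVertexOver φ B := by
  induction h with
  | rel _ _ h => exact iff_of_true h.2.2.1 h.2.2.2
  | refl _ => rfl
  | symm _ _ _ ih => exact ih.symm
  | trans _ _ _ _ _ ih ih' => exact ih.trans ih'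

variable {φ : C ⥤ E} {μ : C ⥤ D} {κ : D ⥤ E}

/-- The merger part of a canonical decomposition preserves and reflects fiber vertices. -/
theorem IsCanonicalDecomp.isVertexOver_obj_iff (hC : IsNestedGraph C) (hE : IsNestedGraph E)
    (hd : IsCanonicalDecomp φ μ κ) {A : C} :
    IsVertexOver κ (μ.obj A) ↔ IsVertexOver φ A := by
  obtain ⟨hμ, rfl⟩ := hd
  refine ⟨fun h B f hf => hμ.isId_of_contracts hC (h (μ.map f) hf), fun hA Y g hg => ?_⟩
  suffices key : ∀ {X Y : D} (g : X ⟶ Y), GenBy μ g →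
      (∀ B, μ.obj B = X → IsVertexOver (μ ⋙ κ) B) → IsId (κ.map g) → IsId g from
    key g (hμ.2.2.1 g)
      (fun B hB => (isVertexOver_iff_of_eqvGen_mergerRel ((hμ.1 B A).1 hB)).2 hA) hg
  intro X Y g hgen
  induction hgen with
  | id X => exact fun _ _ => ⟨rfl, rfl⟩
  | map f => exact fun hX hf => IsId.map μ (hX _ rfl f hf)
  | comp f g _ _ ihf ihg =>
    intro hX hfg
    rw [κ.map_comp] at hfg
    obtain ⟨hf, hg⟩ := hE.isId_of_comp hfg
    have hf := ihf hX hf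
    obtain ⟨rfl, -⟩ := id hf
    exact hf.comp (ihg hX hg)

end Quotient

/-- for a contraction `κ` and mergers `μ₁, μ₂`, one has
`(μ₂ ∘ μ₁) ∘ κ = μ₂ ∘ (μ₁ ∘ κ)` in `NGr`: the canonical merger–contraction
decomposition `(ρ, σ)` of the admissible epi-functor `(μ₂ ∘ μ₁) ∘ κ` coincides (up to
shifting an isomorphism) with the pair obtained by first canonically decomposing
`μ₁ ∘ κ` as `κ'' ∘ μ'` and then canonically decomposing `μ₂ ∘ κ''` as `lam ∘ ν`,
namely with the pair `(μ' ⋙ ν, lam)`. -/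
theorem merger_merger_contraction_assoc {M N₁ N₂ N₃ P Q R : Type u}
    [Category.{v} M] [Category.{v} N₁] [Category.{v} N₂] [Category.{v} N₃]
    [Category.{v} P] [Category.{v} Q] [Category.{v} R]
    (hM : IsNestedGraph M) (h₁ : IsNestedGraph N₁) (h₂ : IsNestedGraph N₂)
    (h₃ : IsNestedGraph N₃) (hP : IsNestedGraph P) (hQ : IsNestedGraph Q)
    (hR : IsNestedGraph R)
    (κ : M ⥤ N₁) (μ₁ : N₁ ⥤ N₂) (μ₂ : N₂ ⥤ N₃)
    (hκ : IsContraction κ) (hμ₁ : IsMerger μ₁) (hμ₂ : IsMerger μ₂)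
    (μ' : M ⥤ P) (κ'' : P ⥤ N₂) (hd₁ : IsCanonicalDecomp (κ ⋙ μ₁) μ' κ'')
    (ν : P ⥤ Q) (lam : Q ⥤ N₃) (hd₂ : IsCanonicalDecomp (κ'' ⋙ μ₂) ν lam)
    (ρ : M ⥤ R) (σ : R ⥤ N₃) (hd₃ : IsCanonicalDecomp (κ ⋙ (μ₁ ⋙ μ₂)) ρ σ) :
    PairEquiv ρ σ (μ' ⋙ ν) lam := by
  have hμ₂c : ∀ ⦃A B : N₂⦄ (f : A ⟶ B), Contracts μ₂ f → IsId f := by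
    obtain ⟨-, -, r, -, hr⟩ := hμ₂
    exact fun A B f hf => hr.isId_of_contracts h₂ hf
  have hvM : ∀ A, IsVertexOver (κ ⋙ μ₁ ⋙ μ₂) A ↔ IsVertexOver (κ ⋙ μ₁) A := fun A =>
    isVertexOver_comp_iff (φ := κ ⋙ μ₁) hμ₂c
  have hvP : ∀ A, IsVertexOver (κ'' ⋙ μ₂) (μ'.obj A) ↔ IsVertexOver (κ ⋙ μ₁ ⋙ μ₂) A := fun A =>
    (isVertexOver_comp_iff hμ₂c).trans ((hd₁.isVertexOver_obj_iff hM h₂).trans (hvM A).symm)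
  have hobj : ∀ A, (κ'' ⋙ μ₂).obj (μ'.obj A) = (κ ⋙ μ₁ ⋙ μ₂).obj A := fun A =>
    congrArg μ₂.obj (Functor.congr_obj hd₁.2 A)
  obtain ⟨hμ', hμ'κ⟩ := hd₁
  obtain ⟨hν, hνlam⟩ := hd₂
  obtain ⟨hρ, hρσ⟩ := hd₃
  obtain ⟨e, he, -⟩ := hρ.2.2.2 Q (μ' ⋙ ν) fun A B ⟨_, hAB, hA, hB⟩ =>
    hν.obj_eq_of_isVertexOver (by rw [hobj, hobj, hAB]) ((hvP A).2 hA) ((hvP B).2 hB)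
  obtain ⟨τ, hτ, -⟩ := hμ'.2.2.2 R ρ fun A B ⟨_, hAB, hA, hB⟩ =>
    hρ.obj_eq_of_isVertexOver (congrArg μ₂.obj hAB) ((hvM A).2 hA) ((hvM B).2 hB)
  obtain ⟨e', he', -⟩ := hν.2.2.2 R τ <| by
    rintro X Y ⟨-, hXY, hX, hY⟩
    obtain ⟨A, rfl⟩ := hμ'.2.1 X
    obtain ⟨B, rfl⟩ := hμ'.2.1 Y
    rw [hobj, hobj] at hXY
    have h := hρ.obj_eq_of_isVertexOver hXY ((hvP A).1 hX) ((hvP B).1 hY)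
    rwa [← hτ] at h
  refine ⟨e, e', hρ.functor_ext ?_, hν.functor_ext (hμ'.functor_ext ?_), he, hρ.functor_ext ?_⟩
  · rw [← Functor.assoc, he, Functor.assoc, he', hτ, Functor.comp_id]
  · rw [← Functor.assoc ν, he', ← Functor.assoc, hτ, he, Functor.comp_id]
  · rw [← Functor.assoc, he, Functor.assoc, hνlam, hρσ, ← Functor.assoc, hμ'κ, Functor.assoc]
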